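/- arXiv:1103.0247 — 2 statements merged into one kernel-verified Lean document; each statement's English description precedes it below -/
import Mathlib

section
/- Let κ be a Kunen cardinal and let {X_α : α < κ} be a family of separable Banach spaces. Then the ℓ¹-sum X := (⊕_{α<κ} X_α)_{ℓ¹} satisfies Ba(X_w) = Bo(X), where Bo(X) is the Borel σ-algebra of the norm topology. -/
/-- The σ-algebra on `ι × ι` generated by all rectangles `A ×ˢ B` with `A, B ⊆ ι`. -/
def productSigma (ι : Type*) : MeasurableSpace (ι × ι) :=
  MeasurableSpace.generateFrom {S : Set (ι × ι) | ∃ A B : Set ι, S = A ×ˢ B}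

/-- `|ι|` is a Kunen cardinal. -/
def IsKunen (ι : Type*) : Prop := productSigma ι = ⊤

/-- The Baire σ-algebra of the weak topology of a normed space `X`: the σ-algebra
generated by all continuous linear functionals on `X`. -/
def BaW (X : Type*) [NormedAddCommGroup X] [NormedSpace ℝ X] : MeasurableSpace X :=
  ⨆ φ : X →L[ℝ] ℝ, MeasurableSpace.comap φ Real.measurableSpace

set_option linter.style.haveILetI false
open MeasureTheory Set

lemma exists_sep {ι : Type*} (hκ : IsKunen ι) :
    ∃ A : ℕ → Set ι, ∀ b c, (∀ n, b ∈ A n ↔ c ∈ A n) → b = c := by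
  have key : ∀ S : Set (ι × ι), MeasurableSet[productSigma ι] S →
      ∃ A : ℕ → Set ι, ∀ b c, (∀ n, b ∈ A n ↔ c ∈ A n) → ∀ a, ((a, b) ∈ S ↔ (a, c) ∈ S) := by
    intro S hS
    induction S, hS using MeasurableSpace.generateFrom_induction with
    | hC t ht _ =>
      obtain ⟨A, B, rfl⟩ := ht
      exact ⟨fun _ => B, fun b c h a => by simp [h 0]⟩
    | empty => exact ⟨fun _ => ∅, by simp⟩
    | compl t _ ih =>
      obtain ⟨A, hA⟩ := ih
      exact ⟨A, fun b c h a => not_congr (hA b c h a)⟩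
    | iUnion s _ ih =>
      choose A hA using ih
      refine ⟨fun n => A n.unpair.1 n.unpair.2, fun b c h a => ?_⟩
      simp only [mem_iUnion]
      refine exists_congr fun i => hA i b c (fun n => ?_) a
      simpa using h (Nat.pair i n)
  obtain ⟨A, hA⟩ := key (diagonal ι) (by rw [show productSigma ι = ⊤ from hκ]; trivial)
  exact ⟨A, fun b c h => by simpa using (hA b c h b).1 rfl⟩

lemma exists_family {ι : Type*} (hκ : IsKunen ι) :
    ∃ (K : Type) (_ : Countable K) (T : K → ι → ℕ), ∀ (F : Finset ι) (g : ι → ℕ),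
      ∃ k, ∀ a ∈ F, T k a = g a := by
  classical
  obtain ⟨A, hA⟩ := exists_sep hκ
  refine ⟨Σ m : ℕ, ((Fin m → Bool) → ℕ), inferInstance,
    fun k a => k.2 (fun i => decide (a ∈ A i)), fun F g => ?_⟩
  have h1 : ∀ p : ι × ι, ∃ n, p.1 ≠ p.2 → ¬ (p.1 ∈ A n ↔ p.2 ∈ A n) := by
    intro p
    by_cases h : p.1 = p.2
    · exact ⟨0, fun h' => absurd h h'⟩
    · by_contra! hc
      exact h (hA _ _ fun n => (hc n).2)
  choose N hN using h1
  let m := (F ×ˢ F).sup N + 1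
  let f : ι → (Fin m → Bool) := fun a i => decide (a ∈ A i)
  have hf : Set.InjOn f F := by
    intro a ha b hb hab
    by_contra hne
    have hlt : N (a, b) < m :=
      Nat.lt_succ_of_le (Finset.le_sup (f := N) (Finset.mem_product.2 ⟨ha, hb⟩))
    have := congrFun hab ⟨N (a, b), hlt⟩
    exact hN (a, b) hne (by simpa [f] using this)
  rcases isEmpty_or_nonempty ι with he | he
  · exact ⟨⟨0, fun _ => 0⟩, fun a => isEmptyElim a⟩
  refine ⟨⟨m, fun c => g (Function.invFunOn f F c)⟩, fun a ha => ?_⟩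
  change g (Function.invFunOn f F (f a)) = g a
  rw [hf.leftInvOn_invFunOn ha]

lemma top_prod {ι : Type*} (hκ : IsKunen ι) {A B : Type*} (f : A → ι) (g : B → ι)
    (hf : f.Injective) (hg : g.Injective) :
    (⊤ : MeasurableSpace A).prod (⊤ : MeasurableSpace B) = ⊤ := by
  refine top_le_iff.1 fun S _ => ?_
  letI : MeasurableSpace A := ⊤
  letI : MeasurableSpace B := ⊤
  letI : MeasurableSpace ι := ⊤
  have h1 : ∀ T : Set (ι × ι), MeasurableSet T := by
    have : productSigma ι ≤ Prod.instMeasurableSpace := by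
      refine MeasurableSpace.generateFrom_le ?_
      rintro _ ⟨A, B, rfl⟩
      exact MeasurableSet.prod trivial trivial
    intro T
    refine this _ ?_
    rw [show productSigma ι = ⊤ from hκ]; trivial
  have h2 : Measurable (Prod.map f g) :=
    (measurable_from_top.comp measurable_fst).prodMk (measurable_from_top.comp measurable_snd)
  have := h2 (h1 (Prod.map f g '' S))
  rwa [(hf.prodMap hg).preimage_image] at this

lemma top_list {ι : Type*} (hκ : IsKunen ι) :
    (⊤ : MeasurableSpace (ι × ℕ)).prod (⊤ : MeasurableSpace (List (ι × ℕ))) = ⊤ := by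
  rcases finite_or_infinite ι with h | h
  · refine top_le_iff.1 fun S _ => ?_
    letI : MeasurableSpace (ι × ℕ) := ⊤
    letI : MeasurableSpace (List (ι × ℕ)) := ⊤
    exact S.to_countable.measurableSet
  · have e1 : Cardinal.mk (ι × ℕ) = Cardinal.mk ι := by
      simp [Cardinal.mul_aleph0_eq (Cardinal.aleph0_le_mk ι)]
    have e2 : Cardinal.mk (List (ι × ℕ)) = Cardinal.mk ι := by
      rw [Cardinal.mk_list_eq_mk, e1]
    obtain ⟨f⟩ := Cardinal.eq.1 e1
    obtain ⟨g⟩ := Cardinal.eq.1 e2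
    exact top_prod hκ f g f.injective g.injective

set_option linter.unusedSectionVars false
section
universe u v
variable {ι : Type u} {X : ι → Type v} [∀ α, NormedAddCommGroup (X α)] [∀ α, NormedSpace ℝ (X α)]

lemma lp1_summable (x : lp X 1) : Summable fun a => ‖x a‖ := by
  simpa using (lp.memℓp x).summable (by simp)

lemma lp1_norm (x : lp X 1) : ‖x‖ = ∑' a, ‖x a‖ := by
  simpa using lp.norm_eq_tsum_rpow (p := 1) (by simp) x

lemma psi_le (ψ : ∀ a, X a →L[ℝ] ℝ) (hψ : ∀ a, ‖ψ a‖ ≤ 1) (a : ι) (y : X a) : ‖ψ a y‖ ≤ ‖y‖ := by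
  simpa using (ψ a).le_of_opNorm_le (hψ a) y

lemma psi_summable (ψ : ∀ a, X a →L[ℝ] ℝ) (hψ : ∀ a, ‖ψ a‖ ≤ 1) (x : lp X 1) :
    Summable fun a => ψ a (x a) :=
  Summable.of_norm_bounded (lp1_summable x) fun a => psi_le ψ hψ a _

lemma exists_functional (ψ : ∀ a, X a →L[ℝ] ℝ) (hψ : ∀ a, ‖ψ a‖ ≤ 1) :
    ∃ φ : lp X 1 →L[ℝ] ℝ, ∀ x, φ x = ∑' a, ψ a (x a) := by
  refine ⟨LinearMap.mkContinuous
    { toFun := fun x => ∑' a, ψ a (x a)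
      map_add' := fun x y => ?_
      map_smul' := fun c x => ?_ } 1 fun x => ?_, fun x => rfl⟩
  · simp only [lp.coeFn_add, Pi.add_apply, map_add]
    exact (psi_summable ψ hψ x).tsum_add (psi_summable ψ hψ y)
  · simp only [lp.coeFn_smul, Pi.smul_apply, map_smul, RingHom.id_apply, smul_eq_mul]
    exact tsum_mul_left
  · simp only [one_mul, LinearMap.coe_mk, AddHom.coe_mk]
    rw [lp1_norm]
    exact tsum_of_norm_bounded (lp1_summable x).hasSum fun a => psi_le ψ hψ a _

lemma measurable_functional (φ : lp X 1 →L[ℝ] ℝ) : Measurable[BaW (lp X 1)] φ := by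
  rw [measurable_iff_comap_le]
  exact le_iSup (fun φ : lp X 1 →L[ℝ] ℝ => MeasurableSpace.comap φ Real.measurableSpace) φ

lemma exists_norming (Y : Type*) [NormedAddCommGroup Y] [NormedSpace ℝ Y]
    [TopologicalSpace.SeparableSpace Y] :
    ∃ φ : ℕ → Y →L[ℝ] ℝ, (∀ n, ‖φ n‖ ≤ 1) ∧ ∀ y, ∀ ε > 0, ∃ n, ‖y‖ - ε < φ n y := by
  choose φ h1 h2 using fun n => exists_dual_vector'' ℝ (TopologicalSpace.denseSeq Y n)
  refine ⟨φ, h1, fun y ε hε => ?_⟩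
  obtain ⟨n, hn⟩ := (TopologicalSpace.denseRange_denseSeq Y).exists_dist_lt y (half_pos hε)
  refine ⟨n, ?_⟩
  set d := TopologicalSpace.denseSeq Y n
  have e : φ n y = φ n d + φ n (y - d) := by simp
  have h3 : ‖φ n (y - d)‖ ≤ ‖y - d‖ := by simpa using (φ n).le_of_opNorm_le (h1 n) (y - d)
  have h4 := neg_abs_le (φ n (y - d))
  rw [Real.norm_eq_abs] at h3
  rw [dist_eq_norm] at hn
  have h5 : φ n d = ‖d‖ := h2 n
  have h6 : ‖y‖ ≤ ‖d‖ + ‖y - d‖ := by simpa using norm_add_le d (y - d)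
  linarith

lemma measurable_part [∀ α, TopologicalSpace.SeparableSpace (X α)] (hκ : IsKunen ι) (A : Set ι) :
    Measurable[BaW (lp X 1)] fun x : lp X 1 => ∑' a, A.indicator (fun a => ‖x a‖) a := by
  classical
  obtain ⟨K, _, T, hT⟩ := exists_family hκ
  choose φ h1 h2 using fun a => exists_norming (X a)
  let ψ : K → ∀ a, X a →L[ℝ] ℝ := fun k a => if a ∈ A then φ a (T k a) else 0
  have hψ : ∀ k a, ‖ψ k a‖ ≤ 1 := by
    intro k a
    by_cases h : a ∈ A <;> simp [ψ, h, h1]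
  choose Φ hΦ using fun k => exists_functional (ψ k) (hψ k)
  have hs : ∀ x : lp X 1, Summable (A.indicator (fun a => ‖x a‖)) :=
    fun x => (lp1_summable x).indicator A
  have hle : ∀ k (x : lp X 1) a, |ψ k a (x a)| ≤ A.indicator (fun a => ‖x a‖) a := by
    intro k x a
    by_cases h : a ∈ A
    · simpa [h] using psi_le (ψ k) (hψ k) a (x a)
    · simp [ψ, h]
  letI : MeasurableSpace (lp X 1) := BaW (lp X 1)
  refine measurable_of_Ioi fun r => ?_
  have : (fun x : lp X 1 => ∑' a, A.indicator (fun a => ‖x a‖) a) ⁻¹' Ioi r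
      = ⋃ k, Φ k ⁻¹' Ioi r := by
    ext x
    simp only [mem_preimage, mem_Ioi, mem_iUnion]
    constructor
    · intro hr
      set N := A.indicator (fun a => ‖x a‖) with hN
      obtain ⟨ε, hε, hε'⟩ : ∃ ε > 0, r + 3 * ε < ∑' a, N a :=
        ⟨(∑' a, N a - r) / 4, by linarith, by linarith⟩
      obtain ⟨F, hF⟩ := ((hs x).hasSum.eventually (lt_mem_nhds
        (show ∑' a, N a - ε < ∑' a, N a by linarith))).exists
      have hδ : 0 < ε / (F.card + 1) := by positivity
      choose g hg using fun a => h2 a (x a) _ hδ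
      obtain ⟨k, hk⟩ := hT F g
      refine ⟨k, ?_⟩
      rw [hΦ]
      -- compare with N
      have hsψ := psi_summable (ψ k) (hψ k) x
      have e1 := (hs x).sum_add_tsum_compl (s := F)
      have e2 := hsψ.sum_add_tsum_compl (s := F)
      have i1 : ∑ a ∈ F, N a - ε ≤ ∑ a ∈ F, ψ k a (x a) := by
        have : ∑ a ∈ F, (N a - ε / (F.card + 1)) ≤ ∑ a ∈ F, ψ k a (x a) := by
          refine Finset.sum_le_sum fun a ha => ?_
          by_cases h : a ∈ A
          · have := hg a
            simp only [hN, ψ, h, hk a ha, if_true, indicator_of_mem]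
            exact this.le
          · simp [hN, ψ, h, hδ.le]
        rw [Finset.sum_sub_distrib, Finset.sum_const, nsmul_eq_mul] at this
        have h3 : (F.card : ℝ) * (ε / (F.card + 1)) ≤ ε := by
          rw [mul_div_assoc', div_le_iff₀ (by positivity)]
          nlinarith
        linarith
      have i2 : -(∑' a : ↑((F : Set ι)ᶜ), N a) ≤ ∑' a : ↑((F : Set ι)ᶜ), ψ k a (x a) := by
        rw [← tsum_neg]
        refine Summable.tsum_le_tsum (fun a => ?_) ((hs x).subtype _).neg (hsψ.subtype _)
        exact (neg_le_neg (hle k x a)).trans (neg_abs_le _)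
      linarith
    · rintro ⟨k, hk⟩
      refine hk.trans_le ?_
      rw [hΦ]
      exact (psi_summable (ψ k) (hψ k) x).tsum_le_tsum
        (fun a => (le_abs_self _).trans (hle k x a)) (hs x)
  rw [this]
  exact MeasurableSet.iUnion fun k => measurable_functional (Φ k) measurableSet_Ioi

lemma measurable_sub_ba {Z : Type*} [MeasurableSpace Z] (f g : Z → lp X 1)
    (hf : Measurable[_, BaW (lp X 1)] f) (hg : Measurable[_, BaW (lp X 1)] g) :
    Measurable[_, BaW (lp X 1)] fun z => f z - g z := by
  rw [measurable_iff_comap_le, BaW, MeasurableSpace.comap_iSup]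
  refine iSup_le fun φ => ?_
  rw [MeasurableSpace.comap_comp, ← measurable_iff_comap_le]
  have h1 : Measurable (φ ∘ f) := (measurable_functional φ).comp hf
  have h2 : Measurable (φ ∘ g) := (measurable_functional φ).comp hg
  have : (φ ∘ fun z => f z - g z) = fun z => (φ ∘ f) z - (φ ∘ g) z := by
    ext z; simp
  rw [this]
  exact h1.sub h2

lemma measurable_exists_one [∀ α, TopologicalSpace.SeparableSpace (X α)] (hκ : IsKunen ι)
    {Z : Type*} [MeasurableSpace Z] (h : Z → lp X 1) (hh : Measurable[_, BaW (lp X 1)] h)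
    (T : Set (Z × ι)) (hT : MeasurableSet[MeasurableSpace.prod inferInstance ⊤] T) :
    MeasurableSet {z | ∃ a, h z a ≠ 0 ∧ (z, a) ∈ T} := by
  classical
  letI : MeasurableSpace ι := ⊤
  let μ : Z → Measure ι := fun z => Measure.sum fun a => ENNReal.ofReal ‖h z a‖ • Measure.dirac a
  have hμ : ∀ z (A : Set ι), μ z A = ENNReal.ofReal (∑' a, A.indicator (fun a => ‖h z a‖) a) := by
    intro z A
    rw [Measure.sum_apply _ MeasurableSpace.measurableSet_top, ENNReal.ofReal_tsum_of_nonneg]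
    · refine tsum_congr fun a => ?_
      by_cases ha : a ∈ A <;> simp [ha]
    · intro a
      exact indicator_nonneg (fun _ _ => norm_nonneg _) a
    · exact (lp1_summable (h z)).indicator A
  have hm : Measurable μ := by
    refine Measure.measurable_of_measurable_coe _ fun A _ => ?_
    simp only [hμ]
    exact ((measurable_part hκ A).comp hh).ennreal_ofReal
  let κ : ProbabilityTheory.Kernel Z ι := ⟨μ, hm⟩
  have hfin : ∀ z, IsFiniteMeasure (κ z) := fun z => ⟨by
    change μ z univ < _
    rw [hμ]; exact ENNReal.ofReal_lt_top⟩
  have := ProbabilityTheory.Kernel.measurable_kernel_prodMk_left_of_finite (κ := κ) hT hfin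
  have h2 := this (measurableSet_singleton 0).compl
  convert h2 using 1
  ext z
  simp only [mem_ofPred_eq, mem_preimage, mem_compl_iff, mem_singleton_iff]
  change _ ↔ ¬ μ z _ = 0
  rw [Measure.sum_apply _ MeasurableSpace.measurableSet_top, ENNReal.tsum_eq_zero]
  simp [Set.indicator_apply, and_comm]

/-- lists version -/
lemma measurable_exists_list [∀ α, TopologicalSpace.SeparableSpace (X α)] (hκ : IsKunen ι)
    (k : ℕ) : ∀ {Z : Type max u v} [MeasurableSpace Z] (h : Z → lp X 1)
    (_ : Measurable[_, BaW (lp X 1)] h)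
    (T : Set (Z × List (ι × ℕ))) (_ : MeasurableSet[MeasurableSpace.prod inferInstance ⊤] T),
    MeasurableSet {z | ∃ l : List (ι × ℕ), l.length = k ∧ (∀ j ∈ l, h z j.1 ≠ 0) ∧ (z, l) ∈ T} := by
  letI : MeasurableSpace ι := ⊤
  letI : MeasurableSpace (ι × ℕ) := ⊤
  letI : MeasurableSpace (List (ι × ℕ)) := ⊤
  induction k with
  | zero =>
    intro Z _ h hh T hT
    have : Measurable fun z : Z => (z, ([] : List (ι × ℕ))) := measurable_id.prodMk measurable_const
    convert this hT using 1
    ext z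
    simp
  | succ k ih =>
    intro Z _ h hh T hT
    have key : ∀ n : ℕ, MeasurableSet {z | ∃ a, h z a ≠ 0 ∧ (z, a) ∈ {p : Z × ι |
        ∃ l : List (ι × ℕ), l.length = k ∧ (∀ j ∈ l, h p.1 j.1 ≠ 0) ∧
          (p, l) ∈ {q : (Z × ι) × List (ι × ℕ) | (q.1.1, (q.1.2, n) :: q.2) ∈ T}}} := by
      intro n
      refine measurable_exists_one hκ h hh _ ?_
      refine ih (Z := Z × ι) (fun p => h p.1) (hh.comp measurable_fst) _ ?_
      have hc : Measurable fun q : (ι × ℕ) × List (ι × ℕ) => q.1 :: q.2 := by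
        intro S _
        have := top_list hκ
        change MeasurableSet[MeasurableSpace.prod ⊤ ⊤] _
        rw [this]; trivial
      have hi : Measurable fun a : ι => (a, n) := measurable_from_top
      have : Measurable fun q : (Z × ι) × List (ι × ℕ) => (q.1.1, (q.1.2, n) :: q.2) :=
        (measurable_fst.comp measurable_fst).prodMk
          (hc.comp ((hi.comp (measurable_snd.comp measurable_fst)).prodMk measurable_snd))
      exact this hT
    convert MeasurableSet.iUnion key using 1
    ext z
    simp only [mem_ofPred_eq, mem_iUnion]
    constructor
    · rintro ⟨l, hl, h1, h2⟩
      obtain _ | ⟨⟨a, n⟩, l⟩ := l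
      · simp at hl
      · exact ⟨n, a, h1 (a, n) (by simp), l, by simpa using hl,
          fun j hj => h1 j (by simp [hj]), h2⟩
    · rintro ⟨n, a, h1, l, h2, h3, h4⟩
      refine ⟨(a, n) :: l, by simp [h2], ?_, h4⟩
      intro j hj
      rcases List.mem_cons.1 hj with rfl | hj
      · exact h1
      · exact h3 j hj

open Classical in
/-- finite combination coded by a list -/
noncomputable def lsum [∀ α, TopologicalSpace.SeparableSpace (X α)] (l : List (ι × ℕ)) : lp X 1 :=
  (l.map fun j => lp.single 1 j.1 (TopologicalSpace.denseSeq (X j.1) j.2)).sum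

lemma exists_lsum [∀ α, TopologicalSpace.SeparableSpace (X α)] (x : lp X 1) (ε : ℝ) (hε : 0 < ε) :
    ∃ l : List (ι × ℕ), (∀ j ∈ l, x j.1 ≠ 0) ∧ dist x (lsum l) < ε := by
  classical
  let G : AddSubmonoid (lp X 1) :=
    { carrier := {y | ∃ l : List (ι × ℕ), (∀ j ∈ l, x j.1 ≠ 0) ∧ lsum l = y}
      zero_mem' := ⟨[], by simp, by simp [lsum]⟩
      add_mem' := by
        rintro _ _ ⟨l, hl, rfl⟩ ⟨m, hm, rfl⟩
        refine ⟨l ++ m, ?_, by simp [lsum]⟩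
        intro j hj
        rcases List.mem_append.1 hj with h | h
        exacts [hl j h, hm j h] }
  have h1 : ∀ a, lp.single 1 a (x a) ∈ G.topologicalClosure := by
    intro a
    by_cases ha : x a = 0
    · rw [ha, lp.single_zero]; exact zero_mem _
    · have hd := TopologicalSpace.denseRange_denseSeq (X a) (x a)
      have hc : Continuous fun y : X a => (lp.single 1 a y : lp X 1) :=
        (lp.isometry_single (E := X) (p := 1) a).continuous
      refine map_mem_closure hc hd ?_
      rintro _ ⟨n, rfl⟩
      refine ⟨[(a, n)], by simpa using ha, ?_⟩
      simp [lsum]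
  have h2 : x ∈ G.topologicalClosure := by
    have := lp.hasSum_single (E := X) (p := 1) (by simp) x
    exact G.isClosed_topologicalClosure.mem_of_tendsto this
      (Filter.Eventually.of_forall fun s => sum_mem fun a _ => h1 a)
  obtain ⟨_, ⟨l, hl, rfl⟩, hd⟩ := Metric.mem_closure_iff.1 h2 ε hε
  exact ⟨l, hl, hd⟩

end

/-- If `κ = |ι|` is a Kunen cardinal and `(X α)_{α<κ}` is a family of separable Banach
spaces, then the ℓ¹-sum `X = (⊕_{α<κ} X α)_{ℓ¹}` satisfies `Ba(X_w) = Bo(X)`. -/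
theorem stmt3 (ι : Type*) (hκ : IsKunen ι) (X : ι → Type*)
    [∀ α, NormedAddCommGroup (X α)] [∀ α, NormedSpace ℝ (X α)]
    [∀ α, CompleteSpace (X α)] [∀ α, TopologicalSpace.SeparableSpace (X α)] :
    BaW (lp X 1) = borel (lp X 1) := by
  apply le_antisymm
  · refine iSup_le fun φ => ?_
    rw [← measurable_iff_comap_le, BorelSpace.measurable_eq (α := ℝ)]
    exact φ.continuous.borel_measurable
  refine MeasurableSpace.generateFrom_le fun U hU => ?_
  letI : MeasurableSpace (lp X 1) := BaW (lp X 1)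
  letI : MeasurableSpace (List (ι × ℕ)) := ⊤
  have hnorm : Measurable fun x : lp X 1 => ‖x‖ := by
    have := measurable_part (X := X) hκ univ
    simpa only [indicator_univ, ← lp1_norm] using this
  let T : ℕ → Set (lp X 1 × List (ι × ℕ)) := fun n =>
    {p | Metric.ball (lsum p.2) (1 / (n + 1 : ℝ)) ⊆ U} ∩ {p | ‖p.1 - lsum p.2‖ < 1 / (n + 1 : ℝ)}
  have hT : ∀ n, MeasurableSet (T n) := by
    intro n
    refine MeasurableSet.inter ?_ ?_
    · exact measurable_snd (t := {l : List (ι × ℕ) | Metric.ball (lsum l : lp X 1) _ ⊆ U}) trivial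
    · have h1 : Measurable fun p : lp X 1 × List (ι × ℕ) => p.1 - lsum p.2 :=
        measurable_sub_ba _ _ measurable_fst
          (Measurable.comp (g := fun l : List (ι × ℕ) => (lsum l : lp X 1))
            measurable_from_top measurable_snd)
      exact measurableSet_lt (hnorm.comp h1) measurable_const
  have key := MeasurableSet.iUnion fun n => MeasurableSet.iUnion fun k =>
    measurable_exists_list hκ k (Z := lp X 1) id measurable_id (T n) (hT n)
  convert key using 1
  ext x
  simp only [mem_iUnion, mem_ofPred_eq, id]
  constructor
  · intro hx
    obtain ⟨r, hr, hrU⟩ := Metric.isOpen_iff.1 (show IsOpen U by simpa using hU) x hx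
    obtain ⟨n, hn⟩ := exists_nat_one_div_lt (half_pos hr)
    obtain ⟨l, hl, hd⟩ := exists_lsum x (1 / (n + 1 : ℝ)) (by positivity)
    refine ⟨n, l.length, l, rfl, hl, ?_, ?_⟩
    · refine (fun y hy => hrU ?_)
      rw [Metric.mem_ball] at hy ⊢
      have := dist_triangle_right y x (lsum l)
      linarith
    · simpa [dist_eq_norm] using hd
  · rintro ⟨n, k, l, -, -, h1, h2⟩
    exact h1 (by simpa [dist_eq_norm] using h2)
end

section
/- For any cardinal κ the following are equivalent: (i) κ is a Kunen cardinal; (ii) every equivalent norm on ℓ¹(κ) is Ba(ℓ¹(κ)_w)-measurable; (iii) every equivalent norm on C(2^κ) is Ba(C(2^κ)_w)-measurable. -/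
/-- `N` is an equivalent norm on `X`. -/
def IsEquivNorm {X : Type*} [NormedAddCommGroup X] [NormedSpace ℝ X] (N : X → ℝ) : Prop :=
  (∀ x y : X, N (x + y) ≤ N x + N y) ∧
  (∀ (a : ℝ) (x : X), N (a • x) = |a| * N x) ∧
  ∃ c C : ℝ, 0 < c ∧ 0 < C ∧ ∀ x : X, c * ‖x‖ ≤ N x ∧ N x ≤ C * ‖x‖

section part1

theorem s8_meas_clm {X : Type*} [NormedAddCommGroup X] [NormedSpace ℝ X] (φ : X →L[ℝ] ℝ) :
    @Measurable _ _ (BaW X) Real.measurableSpace φ := by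
  rw [measurable_iff_comap_le]
  exact le_iSup (fun φ : X →L[ℝ] ℝ => MeasurableSpace.comap φ Real.measurableSpace) φ

theorem s8_meas_to_BaW {X Y : Type*} [NormedAddCommGroup X] [NormedSpace ℝ X]
    (m : MeasurableSpace Y) (g : Y → X)
    (h : ∀ φ : X →L[ℝ] ℝ, @Measurable _ _ m Real.measurableSpace (fun y => φ (g y))) :
    @Measurable _ _ m (BaW X) g := by
  rw [measurable_iff_comap_le]
  unfold BaW
  rw [MeasurableSpace.comap_iSup]
  refine iSup_le fun φ => ?_
  rw [MeasurableSpace.comap_comp]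
  exact (measurable_iff_comap_le).1 (h φ)

theorem s8_norm_equiv (X : Type*) [NormedAddCommGroup X] [NormedSpace ℝ X] :
    IsEquivNorm (fun x : X => ‖x‖) :=
  ⟨norm_add_le, fun a x => by simp [norm_smul], 1, 1, one_pos, one_pos, fun x => by simp⟩

theorem s8_productSigma_fst {ι : Type*} (h : ι → ℝ) :
    @Measurable _ _ (productSigma ι) Real.measurableSpace (fun q : ι × ι => h q.1) := by
  intro s _
  apply MeasurableSpace.measurableSet_generateFrom
  exact ⟨h ⁻¹' s, Set.univ, by ext; simp⟩

theorem s8_productSigma_snd {ι : Type*} (h : ι → ℝ) :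
    @Measurable _ _ (productSigma ι) Real.measurableSpace (fun q : ι × ι => h q.2) := by
  intro s _
  apply MeasurableSpace.measurableSet_generateFrom
  exact ⟨Set.univ, h ⁻¹' s, by ext; simp⟩

theorem s8_kunen_of {ι X : Type*} [NormedAddCommGroup X] [NormedSpace ℝ X]
    (u : ι → X) (l : ι → X →ₗ[ℝ] ℝ) (K : ℝ) (hK : 0 < K) (hl : ∀ a x, |l a x| ≤ K * ‖x‖)
    (h1 : ∀ a, l a (u a) = 1) (h0 : ∀ a b, a ≠ b → l a (u b) = 0)
    (H : ∀ N : X → ℝ, IsEquivNorm N → @Measurable _ ℝ (BaW X) Real.measurableSpace N) :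
    IsKunen ι := by
  classical
  have key : ∀ A : Set (ι × ι), (∀ q ∈ A, q.1 ≠ q.2) → @MeasurableSet _ (productSigma ι) A := by
    intro A hA
    let w : A → X → ℝ := fun q x => |l q.1.1 x| + 2 * |l q.1.2 x|
    let p : X → ℝ := fun x => ⨆ q : A, w q x
    have wb : ∀ q x, w q x ≤ 3 * K * ‖x‖ := by
      intro q x
      have := hl q.1.1 x
      have := hl q.1.2 x
      simp only [w]; linarith
    have bdd : ∀ x, BddAbove (Set.range fun q : A => w q x) := by
      intro x
      refine ⟨3 * K * ‖x‖, ?_⟩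
      rintro _ ⟨q, rfl⟩
      exact wb q x
    have w0 : ∀ q x, 0 ≤ w q x := fun q x => by simp only [w]; positivity
    have p0 : ∀ x, 0 ≤ p x := fun x => Real.iSup_nonneg fun q => w0 q x
    have pb : ∀ x, p x ≤ 3 * K * ‖x‖ := fun x =>
      Real.iSup_le (fun q => wb q x) (by positivity)
    have padd : ∀ x y, p (x + y) ≤ p x + p y := by
      intro x y
      refine Real.iSup_le (fun q => ?_) (add_nonneg (p0 x) (p0 y))
      have e1 : w q x ≤ p x := le_ciSup (bdd x) q
      have e2 : w q y ≤ p y := le_ciSup (bdd y) q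
      have e3 : w q (x + y) ≤ w q x + w q y := by
        simp only [w, map_add]
        have := abs_add_le (l q.1.1 x) (l q.1.1 y)
        have := abs_add_le (l q.1.2 x) (l q.1.2 y)
        linarith
      linarith
    have psm : ∀ (a : ℝ) x, p (a • x) = |a| * p x := by
      intro a x
      simp only [p]
      rw [Real.mul_iSup_of_nonneg (abs_nonneg a)]
      congr 1
      ext q
      simp only [w, map_smul, smul_eq_mul, abs_mul]
      ring
    have hN : IsEquivNorm (fun x => ‖x‖ + p x) := by
      refine ⟨fun x y => ?_, fun a x => ?_, 1, 1 + 3 * K, one_pos, by positivity, fun x => ⟨?_, ?_⟩⟩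
      · have := norm_add_le x y
        have := padd x y
        linarith
      · simp only [psm, norm_smul, Real.norm_eq_abs]; ring
      · have := p0 x; linarith
      · have := pb x; linarith
    have hp : @Measurable _ ℝ (BaW X) Real.measurableSpace p := by
      have := (H _ hN).sub (H _ (s8_norm_equiv X))
      convert this using 1
      ext x; simp
    have hg : @Measurable _ _ (productSigma ι) (BaW X) (fun q : ι × ι => u q.1 + (2:ℝ) • u q.2) := by
      apply s8_meas_to_BaW
      intro φ
      simp only [map_add, map_smul, smul_eq_mul]
      exact (s8_productSigma_fst (fun a => φ (u a))).add
        ((s8_productSigma_snd (fun a => φ (u a))).const_mul 2)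
    have hm := (hp.comp hg) (measurableSet_singleton (5:ℝ))
    convert hm using 1
    have luu : ∀ a b, l a (u b) = if a = b then 1 else 0 := by
      intro a b
      split_ifs with h
      · rw [h]; exact h1 b
      · exact h0 a b h
    ext ⟨a, b⟩
    simp only [Set.mem_preimage, Function.comp, Set.mem_singleton_iff]
    constructor
    · intro hab
      have hne : a ≠ b := hA _ hab
      apply le_antisymm
      · refine Real.iSup_le (fun q => ?_) (by norm_num)
        obtain ⟨⟨c, d⟩, hq⟩ := q
        have hcd : c ≠ d := hA _ hq
        simp only [w, map_add, map_smul, luu, smul_eq_mul]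
        split_ifs <;> first | (exfalso; grind) | norm_num
      · have e1 := le_ciSup (bdd (u a + (2:ℝ) • u b)) ⟨(a, b), hab⟩
        refine le_trans ?_ e1
        simp only [w, map_add, map_smul, luu, smul_eq_mul, if_neg hne, if_neg hne.symm]
        norm_num
    · intro hpe
      by_contra hab
      have h5 : p (u a + (2:ℝ) • u b) ≠ 5 := by
        by_cases hne : a = b
        · subst hne
          intro h5
          by_cases hex : ∃ q : A, q.1.2 = a
          · obtain ⟨q, hq⟩ := hex
            have e1 := le_ciSup (bdd (u a + (2:ℝ) • u a)) q
            have : w q (u a + (2:ℝ) • u a) ≤ 5 := h5 ▸ e1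
            simp only [w, map_add, map_smul, luu, smul_eq_mul, hq] at this
            split_ifs at this <;> norm_num at this
          · have : p (u a + (2:ℝ) • u a) ≤ 4 := by
              refine Real.iSup_le (fun q => ?_) (by norm_num)
              have hq : q.1.2 ≠ a := fun h => hex ⟨q, h⟩
              simp only [w, map_add, map_smul, luu, smul_eq_mul, if_neg hq]
              split_ifs <;> norm_num
            linarith
        · have : p (u a + (2:ℝ) • u b) ≤ 4 := by
            refine Real.iSup_le (fun q => ?_) (by norm_num)
            obtain ⟨⟨c, d⟩, hq⟩ := q
            have hcd : c ≠ d := hA _ hq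
            have hn : ¬ (c = a ∧ d = b) := by rintro ⟨rfl, rfl⟩; exact hab hq
            simp only [w, map_add, map_smul, luu, smul_eq_mul]
            split_ifs <;> first | (exfalso; grind) | norm_num
          linarith
      exact h5 hpe
  unfold IsKunen
  rw [eq_top_iff]
  intro A _
  have hD : @MeasurableSet _ (productSigma ι) {q : ι × ι | q.1 = q.2} := by
    have := @MeasurableSet.compl _ _ (productSigma ι) (key {q : ι × ι | q.1 ≠ q.2} (fun q hq => hq))
    convert this using 1
    ext q; simp
  have hB : @MeasurableSet _ (productSigma ι) ({a | (a, a) ∈ A} ×ˢ (Set.univ : Set ι)) :=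
    MeasurableSpace.measurableSet_generateFrom ⟨_, _, rfl⟩
  have h2 := key (A ∩ {q | q.1 ≠ q.2}) (fun q hq => hq.2)
  have := @MeasurableSet.union _ (productSigma ι) _ _ h2 (@MeasurableSet.inter _ (productSigma ι) _ _ hD hB)
  convert this using 1
  ext ⟨a, b⟩
  by_cases h : a = b
  · subst h; simp
  · simp [h]

theorem s8_lp_kunen (ι : Type*) (H : ∀ N : lp (fun _ : ι => ℝ) 1 → ℝ, IsEquivNorm N →
        @Measurable _ ℝ (BaW (lp (fun _ : ι => ℝ) 1)) Real.measurableSpace N) : IsKunen ι := by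
  classical
  refine s8_kunen_of (X := lp (fun _ : ι => ℝ) 1) (fun a => lp.single 1 a (1:ℝ))
    (fun a => { toFun := fun x => x a, map_add' := fun x y => rfl, map_smul' := fun c x => rfl })
    1 one_pos ?_ ?_ ?_ H
  · intro a x
    have := lp.norm_apply_le_norm (E := fun _ : ι => ℝ) one_ne_zero x a
    rw [one_mul]
    exact this
  · intro a
    change (lp.single 1 a (1:ℝ) : lp (fun _ : ι => ℝ) 1) a = 1
    simp
  · intro a b h
    change (lp.single 1 b (1:ℝ) : lp (fun _ : ι => ℝ) 1) a = 0
    simp [lp.coeFn_single, h]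

theorem s8_C_kunen (ι : Type*) (H : ∀ N : C(ι → Bool, ℝ) → ℝ, IsEquivNorm N →
        @Measurable _ ℝ (BaW C(ι → Bool, ℝ)) Real.measurableSpace N) : IsKunen ι := by
  classical
  refine s8_kunen_of (X := C(ι → Bool, ℝ))
    (fun a => ⟨fun x => if x a then 1 else 0, 
      (continuous_of_discreteTopology (f := fun b : Bool => if b then (1:ℝ) else 0)).comp (continuous_apply a)⟩)
    (fun a => { toFun := fun f => f (fun b => decide (b = a)) - f (fun _ => false), 
                map_add' := fun x y => by simp; ring, map_smul' := fun c x => by simp; ring })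
    2 two_pos ?_ ?_ ?_ H
  · intro a x
    have h1 := x.norm_coe_le_norm (fun b => decide (b = a))
    have h2 := x.norm_coe_le_norm (fun _ => false)
    simp only [Real.norm_eq_abs] at h1 h2
    have := abs_sub (x (fun b => decide (b = a))) (x (fun _ => false))
    simp only [LinearMap.coe_mk, AddHom.coe_mk]
    linarith
  · intro a; simp
  · intro a b h; simp [h.symm]

end part1
section part2
open Set Filter Topology MeasureTheory

theorem s8_inj {ι : Type*} (h : IsKunen ι) : ∃ e : ι → ℕ → Bool, Function.Injective e := by
  classical
  have key : ∀ S : Set (ι × ι), @MeasurableSet _ (productSigma ι) S →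
      ∃ A : ℕ → Set ι, ∀ a b c, (∀ n, a ∈ A n ↔ b ∈ A n) → ((a, c) ∈ S ↔ (b, c) ∈ S) := by
    intro S hS
    refine MeasurableSpace.generateFrom_induction
      (C := {S : Set (ι × ι) | ∃ A B : Set ι, S = A ×ˢ B})
      (fun S _ => ∃ A : ℕ → Set ι, ∀ a b c, (∀ n, a ∈ A n ↔ b ∈ A n) → ((a, c) ∈ S ↔ (b, c) ∈ S))
      ?_ ?_ ?_ ?_ S hS
    · rintro _ ⟨A, B, rfl⟩ _
      refine ⟨fun _ => A, fun a b c hab => ?_⟩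
      simp [hab 0]
    · exact ⟨fun _ => ∅, fun a b c _ => by simp⟩
    · rintro S _ ⟨A, hA⟩
      exact ⟨A, fun a b c hab => by simp [hA a b c hab]⟩
    · intro S _ hS
      choose A hA using hS
      refine ⟨fun m => A m.unpair.1 m.unpair.2, fun a b c hab => ?_⟩
      simp only [mem_iUnion]
      refine exists_congr fun n => hA n a b c fun m => ?_
      simpa using hab (Nat.pair n m)
  obtain ⟨A, hA⟩ := key {q | q.1 = q.2} (by rw [show productSigma ι = ⊤ from h]; trivial)
  refine ⟨fun a n => decide (a ∈ A n), fun a b hab => ?_⟩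
  have := hA a b a (fun n => by simpa using congrFun hab n)
  simpa [eq_comm] using this

theorem s8_pi_top {ι : Type*} [MeasurableSpace ι] [DiscreteMeasurableSpace ι] (h : IsKunen ι) (n : ℕ) :
    ∀ A : Set (Fin n → ι), MeasurableSet A := by
  rcases finite_or_infinite ι with hf | hi
  · intro A
    exact (Set.toFinite A).measurableSet
  have hprod : ∀ A : Set (ι × ι), MeasurableSet A := by
    intro A
    have h1 : productSigma ι ≤ Prod.instMeasurableSpace := by
      apply MeasurableSpace.generateFrom_le
      rintro _ ⟨A, B, rfl⟩
      exact (MeasurableSet.of_discrete).prod (MeasurableSet.of_discrete)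
    apply h1
    rw [show productSigma ι = ⊤ from h]; trivial
  induction n with
  | zero => intro A; exact (Set.toFinite A).measurableSet
  | succ n ih =>
    intro A
    have hc : Cardinal.mk (Fin n → ι) ≤ Cardinal.mk ι := by
      have := Cardinal.power_nat_le (n := n) (Cardinal.aleph0_le_mk ι)
      simpa [Cardinal.mk_arrow] using this
    obtain ⟨j⟩ := (Cardinal.le_def _ _).1 hc
    have hj : Measurable j := fun s _ => ih _
    let g : (Fin (n+1) → ι) → ι × ι := fun v => (v 0, j (fun i => v i.succ))
    have hg : Measurable g := by
      apply Measurable.prodMk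
      · exact measurable_pi_apply 0
      · exact hj.comp (measurable_pi_lambda _ fun i => measurable_pi_apply _)
    have hgi : Function.Injective g := by
      intro v w hvw
      simp only [g, Prod.mk.injEq] at hvw
      have h2 := j.injective hvw.2
      ext i
      refine Fin.cases hvw.1 (fun i => congrFun h2 i) i
    rw [← hgi.preimage_image A]
    exact hg (hprod _)

theorem s8_lim {ι J : Type*} (L : Ultrafilter J) (x : J → ι → Bool) :
    ∃ x0 : ι → Bool, Tendsto x L (𝓝 x0) ∧ ∀ a, ∀ᶠ j in (L : Filter J), x j a = x0 a := by
  obtain ⟨x0, -, h⟩ := isCompact_univ.ultrafilter_le_nhds (L.map x) (by simp)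
  have h' : Tendsto x L (𝓝 x0) := h
  refine ⟨x0, h', fun a => ?_⟩
  have := (tendsto_pi_nhds.1 h') a
  rw [nhds_discrete, tendsto_pure] at this
  exact this

def s8D {ι : Type*} (f : C(ι → Bool, ℝ)) (ε : ℝ) : Set ι :=
  {a | ∃ x y : ι → Bool, (∀ b, b ≠ a → x b = y b) ∧ ε ≤ |f x - f y|}

def s8Q {ι : Type*} (f : C(ι → Bool, ℝ)) (B : Set ι) (t : ℝ) : Prop :=
  ∃ x y : ι → Bool, (∀ b, b ∉ B → x b = y b) ∧ t < |f x - f y|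

def s8cyl {ι : Type*} (e : ι → ℕ → Bool) (k : ℕ) (s : Fin k → Bool) : Set ι :=
  {a | ∀ j : Fin k, e a j = s j}

theorem s8_tend {ι J : Type*} {L : Ultrafilter J} {x y : J → ι → Bool} {x0 y0 : ι → Bool}
    (f : C(ι → Bool, ℝ)) (hx : Tendsto x L (𝓝 x0)) (hy : Tendsto y L (𝓝 y0)) :
    Tendsto (fun j => |f (x j) - f (y j)|) L (𝓝 |f x0 - f y0|) :=
  (((f.continuous.tendsto _).comp hx).sub ((f.continuous.tendsto _).comp hy)).abs

theorem s8_nonempty_iff {ι : Type*} (e : ι → ℕ → Bool) (he : Function.Injective e)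
    (f : C(ι → Bool, ℝ)) (B : Set ι) (ε : ℝ) (hε : 0 < ε) :
    (s8D f ε ∩ B).Nonempty ↔
      ∀ k : ℕ, ∃ s : Fin k → Bool, s8Q f (B ∩ s8cyl e k s) (ε - 1 / ((k:ℝ) + 1)) := by
  constructor
  · rintro ⟨a, ⟨x, y, hxy, h⟩, haB⟩ k
    refine ⟨fun j => e a j, x, y, fun b hb => hxy b ?_, ?_⟩
    · rintro rfl
      exact hb ⟨haB, fun j => rfl⟩
    · have : (0:ℝ) < 1 / ((k:ℝ) + 1) := by positivity
      linarith
  · intro h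
    choose s x y hxy hf using h
    obtain ⟨x0, hx, hx0⟩ := s8_lim (hyperfilter ℕ) x
    obtain ⟨y0, hy, hy0⟩ := s8_lim (hyperfilter ℕ) y
    have hlim : ε ≤ |f x0 - f y0| := by
      have h1 : Tendsto (fun k : ℕ => ε - 1 / ((k:ℝ) + 1)) (hyperfilter ℕ) (𝓝 (ε - 0)) :=
        (tendsto_const_nhds.sub tendsto_one_div_add_atTop_nhds_zero_nat).mono_left Nat.hyperfilter_le_atTop
      rw [sub_zero] at h1
      exact le_of_tendsto_of_tendsto' h1 (s8_tend f hx hy) (fun k => (hf k).le)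
    have hd : ∀ a, x0 a ≠ y0 a → ∀ᶠ k in (hyperfilter ℕ : Filter ℕ), a ∈ B ∩ s8cyl e k (s k) := by
      intro a ha
      filter_upwards [hx0 a, hy0 a] with k h1 h2
      by_contra hb
      exact ha (by rw [← h1, ← h2]; exact hxy k a hb)
    have huniq : ∀ a b, x0 a ≠ y0 a → x0 b ≠ y0 b → a = b := by
      intro a b ha hb
      apply he
      ext n
      have h3 : ∀ᶠ k in (hyperfilter ℕ : Filter ℕ), n < k := 
        Nat.hyperfilter_le_atTop (eventually_gt_atTop n)
      obtain ⟨k, h1, h2, h3⟩ := ((hd a ha).and ((hd b hb).and h3)).exists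
      rw [h1.2 ⟨n, h3⟩, h2.2 ⟨n, h3⟩]
    have hne : x0 ≠ y0 := by
      rintro rfl
      simp at hlim
      linarith
    obtain ⟨a, ha⟩ := Function.ne_iff.1 hne
    refine ⟨a, ⟨x0, y0, fun b hb => ?_, hlim⟩, ?_⟩
    · by_contra hb'
      exact hb (huniq _ _ hb' ha)
    · obtain ⟨k, hk⟩ := (hd a ha).exists
      exact hk.1

theorem s8_D_finite {ι : Type*} (f : C(ι → Bool, ℝ)) (ε : ℝ) (hε : 0 < ε) : (s8D f ε).Finite := by
  by_contra hinf
  have hinf : (s8D f ε).Infinite := hinf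
  let g := hinf.natEmbedding
  have hg : ∀ k, ((g k : s8D f ε) : ι) ∈ s8D f ε := fun k => (g k).2
  choose x y hxy hf using hg
  obtain ⟨x0, hx, hx0⟩ := s8_lim (hyperfilter ℕ) x
  obtain ⟨y0, hy, hy0⟩ := s8_lim (hyperfilter ℕ) y
  have hlim : ε ≤ |f x0 - f y0| := ge_of_tendsto' (s8_tend f hx hy) hf
  have : x0 = y0 := by
    funext a
    have h3 : ∀ᶠ k in (hyperfilter ℕ : Filter ℕ), a ≠ (g k : ι) := by
      have : {k | a = (g k : ι)}.Subsingleton := by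
        intro k hk l hl
        exact g.injective (Subtype.ext (hk.symm.trans hl))
      exact this.finite.compl_mem_hyperfilter
    obtain ⟨k, h1, h2, h3⟩ := ((hx0 a).and ((hy0 a).and h3)).exists
    rw [← h1, ← h2]
    exact hxy k a h3
  subst this
  simp at hlim
  linarith

theorem s8_unif {ι : Type*} (f : C(ι → Bool, ℝ)) (δ : ℝ) (hδ : 0 < δ) :
    ∃ F : Finset ι, ∀ x y : ι → Bool, (∀ a ∈ F, x a = y a) → |f x - f y| < δ := by
  by_contra! h
  choose x y hxy hf using h
  let L : Ultrafilter (Finset ι) := Ultrafilter.of atTop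
  obtain ⟨x0, hx, hx0⟩ := s8_lim L x
  obtain ⟨y0, hy, hy0⟩ := s8_lim L y
  have hlim : δ ≤ |f x0 - f y0| := ge_of_tendsto' (s8_tend f hx hy) hf
  have : x0 = y0 := by
    funext a
    have h3 : ∀ᶠ F in (L : Filter (Finset ι)), a ∈ F :=
      Ultrafilter.of_le _ ((eventually_ge_atTop {a}).mono fun F hF => by simpa using hF)
    obtain ⟨F, h1, h2, h3⟩ := ((hx0 a).and ((hy0 a).and h3)).exists
    rw [← h1, ← h2]
    exact hxy F a h3
  subst this
  simp at hlim
  linarith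

end part2
section part3
open Set Filter Topology MeasureTheory

theorem s8_clopens_countable : Countable (TopologicalSpace.Clopens (ℕ → Bool)) :=
  TopologicalSpace.Clopens.countable_iff_secondCountable.2 inferInstance

open Classical in
noncomputable def s8pt {ι : Type*} (e : ι → ℕ → Bool) (c : TopologicalSpace.Clopens (ℕ → Bool)) : ι → Bool :=
  fun a => decide (e a ∈ c)

theorem s8_dense {ι : Type*} (e : ι → ℕ → Bool) (he : Function.Injective e) (F : Finset ι)
    (x : ι → Bool) : ∃ c, ∀ a ∈ F, s8pt e c a = x a := by
  have hZ : IsClosed (e '' {a | a ∈ F ∧ x a = true}) :=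
    ((F.finite_toSet.subset fun a ha => ha.1).image e).isClosed
  have hU : IsOpen (e '' {a | a ∈ F ∧ x a = false})ᶜ :=
    ((F.finite_toSet.subset fun a ha => ha.1).image e).isClosed.isOpen_compl
  obtain ⟨C, hC, h1, h2⟩ := exists_clopen_of_closed_subset_open hZ hU (by
    rintro _ ⟨a, ha, rfl⟩ ⟨b, hb, hab⟩
    have := he hab
    subst this
    have := ha.2
    simp [hb.2] at this)
  refine ⟨⟨C, hC⟩, fun a ha => ?_⟩
  cases hxa : x a
  · have : e a ∉ C := fun h => h2 h ⟨a, ⟨ha, hxa⟩, rfl⟩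
    simpa [s8pt, ← SetLike.mem_coe] using this
  · have : e a ∈ C := h1 ⟨a, ⟨ha, hxa⟩, rfl⟩
    simpa [s8pt, ← SetLike.mem_coe] using this

open Classical in
noncomputable def s8mix {ι : Type*} (e : ι → ℕ → Bool) (B : Set ι)
    (c d : TopologicalSpace.Clopens (ℕ → Bool)) : ι → Bool :=
  fun a => if a ∈ B then s8pt e d a else s8pt e c a

theorem s8_Q_iff {ι : Type*} (e : ι → ℕ → Bool) (he : Function.Injective e) (f : C(ι → Bool, ℝ))
    (B : Set ι) (t : ℝ) :
    s8Q f B t ↔ ∃ c d, t < |f (s8pt e c) - f (s8mix e B c d)| := by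
  constructor
  · rintro ⟨x, y, hxy, h⟩
    obtain ⟨F, hF⟩ := s8_unif f ((|f x - f y| - t) / 2) (by linarith)
    obtain ⟨c, hc⟩ := s8_dense e he F x
    obtain ⟨d, hd⟩ := s8_dense e he F y
    refine ⟨c, d, ?_⟩
    have h1 := hF (s8pt e c) x hc
    have h2 := hF (s8mix e B c d) y (by
      intro a ha
      unfold s8mix
      split_ifs with hB
      · exact hd a ha
      · rw [hc a ha]; exact hxy a hB)
    rw [abs_lt] at h1 h2
    rcases abs_cases (f x - f y) with h3 | h3 <;>
    rcases abs_cases (f (s8pt e c) - f (s8mix e B c d)) with h4 | h4 <;> linarith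
  · rintro ⟨c, d, h⟩
    exact ⟨_, _, fun b hb => by simp [s8mix, hb], h⟩

theorem s8_le_iff {ι : Type*} (e : ι → ℕ → Bool) (he : Function.Injective e) (g : C(ι → Bool, ℝ))
    (r : ℝ) (hr : 0 ≤ r) :
    ‖g‖ ≤ r ↔ ∀ c, |g (s8pt e c)| ≤ r := by
  rw [ContinuousMap.norm_le _ hr]
  constructor
  · intro h c; exact h _
  · intro h x
    rw [Real.norm_eq_abs]
    apply le_of_forall_pos_lt_add
    intro δ hδ
    obtain ⟨F, hF⟩ := s8_unif g δ hδ
    obtain ⟨c, hc⟩ := s8_dense e he F x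
    have h1 := hF (s8pt e c) x hc
    have h2 := h c
    rw [abs_lt] at h1
    rw [abs_le] at h2
    rw [abs_lt]
    constructor <;> linarith

theorem s8_sep {ι : Type*} (e : ι → ℕ → Bool) (he : Function.Injective e) (S : Set ι) (hS : S.Finite) :
    ∃ k : ℕ, Set.InjOn (fun a => fun j : Fin k => e a j) S := by
  have h : ∀ᶠ k in atTop, ∀ a ∈ S, ∀ b ∈ S, (fun j : Fin k => e a j) = (fun j : Fin k => e b j) → a = b := by
    rw [eventually_all_finite hS]
    intro a ha
    rw [eventually_all_finite hS]
    intro b hb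
    by_cases hab : a = b
    · exact Eventually.of_forall fun k _ => hab
    · obtain ⟨n, hn⟩ := Function.ne_iff.1 (he.ne hab)
      filter_upwards [eventually_gt_atTop n] with k hk h
      exact absurd (congrFun h ⟨n, hk⟩) hn
  obtain ⟨k, hk⟩ := h.exists
  exact ⟨k, fun a ha b hb hab => hk a ha b hb hab⟩

variable {ι Y : Type*} [MeasurableSpace Y]

theorem s8_meas_Q (e : ι → ℕ → Bool) (he : Function.Injective e) (F : Y → C(ι → Bool, ℝ))
    (hF : ∀ x, Measurable fun y => F y x) (B : Set ι) (t : ℝ) :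
    MeasurableSet {y | s8Q (F y) B t} := by
  have := s8_clopens_countable
  simp_rw [s8_Q_iff e he, ofPred_exists]
  refine MeasurableSet.iUnion fun c => MeasurableSet.iUnion fun d => ?_
  exact measurableSet_lt measurable_const (continuous_abs.measurable.comp ((hF _).sub (hF _)))

theorem s8_meas_nonempty (e : ι → ℕ → Bool) (he : Function.Injective e) (F : Y → C(ι → Bool, ℝ))
    (hF : ∀ x, Measurable fun y => F y x) (B : Set ι) (ε : ℝ) (hε : 0 < ε) :
    MeasurableSet {y | (s8D (F y) ε ∩ B).Nonempty} := by
  simp_rw [s8_nonempty_iff e he _ B ε hε, ofPred_forall, ofPred_exists]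
  exact MeasurableSet.iInter fun k => MeasurableSet.iUnion fun s => s8_meas_Q e he F hF _ _

theorem s8_meas_count [MeasurableSpace ι] [DiscreteMeasurableSpace ι]
    (e : ι → ℕ → Bool) (he : Function.Injective e) (F : Y → C(ι → Bool, ℝ))
    (hF : ∀ x, Measurable fun y => F y x) (B : Set ι) (ε : ℝ) (hε : 0 < ε) :
    Measurable (fun y => Measure.count (s8D (F y) ε ∩ B)) := by
  have h1 : ∀ y, Measure.count (s8D (F y) ε ∩ B) = ⨆ k : ℕ,
      Measure.count ((fun a => fun j : Fin k => e a j) '' (s8D (F y) ε ∩ B)) := by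
    intro y
    apply le_antisymm
    · obtain ⟨k, hk⟩ := s8_sep e he (s8D (F y) ε ∩ B) ((s8_D_finite (F y) ε hε).inter_of_left _)
      refine le_iSup_of_le k ?_
      rw [Measure.count_apply .of_discrete, Measure.count_apply .of_discrete, hk.encard_image]
    · refine iSup_le fun k => ?_
      rw [Measure.count_apply .of_discrete, Measure.count_apply .of_discrete]
      exact_mod_cast Set.encard_image_le _ _
  simp_rw [h1]
  refine Measurable.iSup fun k => ?_
  have h2 : Measurable fun y => (fun a => fun j : Fin k => e a j) '' (s8D (F y) ε ∩ B) := by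
    rw [measurable_set_iff]
    intro s
    have := s8_meas_nonempty e he F hF (B ∩ s8cyl e k s) ε hε
    have h3 : MeasurableSet {y | s ∈ (fun a => fun j : Fin k => e a j) '' (s8D (F y) ε ∩ B)} := by
      convert this using 3 with y
      constructor
      · rintro ⟨a, ha, rfl⟩
        exact ⟨a, ha.1, ha.2, fun j => rfl⟩
      · rintro ⟨a, ha, hb, hc⟩
        exact ⟨a, ⟨ha, hb⟩, funext hc⟩
    exact measurableSet_setOf.1 h3
  exact (measurable_of_finite (fun S : Set (Fin k → Bool) => Measure.count S)).comp h2

theorem s8_meas_rho [MeasurableSpace ι] [DiscreteMeasurableSpace ι]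
    (e : ι → ℕ → Bool) (he : Function.Injective e) (F : Y → C(ι → Bool, ℝ))
    (hF : ∀ x, Measurable fun y => F y x) (ε : ℝ) (hε : 0 < ε) (n : ℕ)
    (S : Set (Y × (Fin n → ι))) (hS : MeasurableSet S) :
    Measurable (fun y => (Measure.pi fun _ : Fin n => Measure.count.restrict (s8D (F y) ε))
      (Prod.mk y ⁻¹' S)) := by
  have hfin : ∀ y, IsFiniteMeasure ((Measure.count : Measure ι).restrict (s8D (F y) ε)) := by
    intro y
    refine ⟨?_⟩
    rw [Measure.restrict_apply_univ]
    exact Measure.count_apply_lt_top.2 (s8_D_finite (F y) ε hε)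
  have hpi : Measurable (fun y => Measure.pi fun _ : Fin n => (Measure.count : Measure ι).restrict (s8D (F y) ε)) := by
    apply Measurable.measure_of_isPiSystem generateFrom_pi.symm isPiSystem_pi
    · rintro _ ⟨A, hA, rfl⟩
      simp_rw [Measure.pi_pi]
      refine Finset.measurable_prod _ fun i _ => ?_
      simp_rw [Measure.restrict_apply (MeasurableSet.of_discrete), inter_comm (A i)]
      exact s8_meas_count e he F hF (A i) ε hε
    · simp_rw [Measure.pi_univ]
      refine Finset.measurable_prod _ fun i _ => ?_
      simp_rw [Measure.restrict_apply_univ]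
      simpa using s8_meas_count e he F hF univ ε hε
  have hrho : Measurable (fun y => (Measure.dirac y).prod
      (Measure.pi fun _ : Fin n => (Measure.count : Measure ι).restrict (s8D (F y) ε))) := by
    apply Measurable.measure_of_isPiSystem generateFrom_prod.symm isPiSystem_prod
    · rintro _ ⟨A, hA, B, hB, rfl⟩
      simp_rw [Measure.prod_prod]
      exact ((Measure.measurable_coe (show MeasurableSet A from hA)).comp Measure.measurable_dirac).mul
        ((Measure.measurable_coe (show MeasurableSet B from hB)).comp hpi)
    · simp_rw [← univ_prod_univ, Measure.prod_prod]
      exact ((Measure.measurable_coe .univ).comp Measure.measurable_dirac).mul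
        ((Measure.measurable_coe .univ).comp hpi)
  have := (Measure.measurable_coe hS).comp hrho
  convert this using 2 with y
  simp only [Function.comp]
  rw [Measure.dirac_prod, Measure.map_apply measurable_prodMk_left hS]

end part3
section part4
open Set Filter Topology MeasureTheory

def s8fn {ι : Type*} {n : ℕ} (g : Fin n → ι) (p : (Fin n → Bool) → ℚ) : C(ι → Bool, ℝ) :=
  ⟨fun x => (p (fun i => x (g i)) : ℝ),
    (continuous_of_discreteTopology (f := fun s : Fin n → Bool => (p s : ℝ))).comp
      (continuous_pi fun i => continuous_apply (g i))⟩

theorem s8_change {ι : Type*} [DecidableEq ι] (f : C(ι → Bool, ℝ)) (G : Finset ι)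
    (hG : ∀ a ∈ G, ∀ ε > 0, a ∉ s8D f ε) (x y : ι → Bool) : f (G.piecewise x y) = f y := by
  induction G using Finset.induction_on with
  | empty => simp
  | insert a G ha ih =>
    rw [← ih (fun b hb => hG b (Finset.mem_insert_of_mem hb))]
    by_contra hne
    refine hG a (Finset.mem_insert_self a G) _ (abs_pos.2 (sub_ne_zero.2 hne)) ⟨_, _, ?_, le_rfl⟩
    intro b hb
    simp [Finset.piecewise, hb]

theorem s8_approx {ι : Type*} (f : C(ι → Bool, ℝ)) (r : ℝ) (hr : 0 < r) :
    ∃ (m n : ℕ) (p : (Fin n → Bool) → ℚ) (g : Fin n → ι),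
      (∀ i, g i ∈ s8D f (1 / ((m:ℝ) + 1))) ∧ ‖f - s8fn g p‖ ≤ r := by
  classical
  obtain ⟨F, hF⟩ := s8_unif f (r / 2) (by linarith)
  let P : ι → Prop := fun a => ∃ m : ℕ, a ∈ s8D f (1 / ((m:ℝ) + 1))
  let G := F.filter P
  have hm : ∃ m : ℕ, ∀ a ∈ G, a ∈ s8D f (1 / ((m:ℝ) + 1)) := by
    have : ∀ᶠ m : ℕ in atTop, ∀ a ∈ G, a ∈ s8D f (1 / ((m:ℝ) + 1)) := by
      rw [eventually_all_finset]
      intro a ha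
      obtain ⟨k, x, y, hxy, hk⟩ := (Finset.mem_filter.1 ha).2
      filter_upwards [eventually_ge_atTop k] with m hm
      refine ⟨x, y, hxy, le_trans ?_ hk⟩
      have : (k:ℝ) ≤ m := by exact_mod_cast hm
      gcongr
    exact this.exists
  obtain ⟨m, hm⟩ := hm
  let q := G.equivFin
  let g : Fin G.card → ι := fun i => (q.symm i : ι)
  have hG : ∀ x y : ι → Bool, (∀ a ∈ G, x a = y a) → |f x - f y| < r / 2 := by
    intro x y hxy
    rw [← s8_change f (F \ G) (by
      intro a ha ε hε haD
      rw [Finset.mem_sdiff] at ha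
      apply ha.2
      refine Finset.mem_filter.2 ⟨ha.1, ?_⟩
      obtain ⟨k, hk⟩ := exists_nat_one_div_lt hε
      obtain ⟨x, y, h1, h2⟩ := haD
      exact ⟨k, x, y, h1, hk.le.trans h2⟩) x y]
    apply hF
    intro a ha
    by_cases h : a ∈ G
    · simp [h, hxy a h]
    · simp [h, ha]
  let ext : (Fin G.card → Bool) → ι → Bool := fun s a => if h : a ∈ G then s (q ⟨a, h⟩) else false
  have hp : ∀ s, ∃ t : ℚ, |f (ext s) - t| < r / 2 := fun s => 
    exists_rat_near (f (ext s)) (by linarith)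
  choose p hp using hp
  refine ⟨m, G.card, p, g, fun i => hm _ (q.symm i).2, ?_⟩
  rw [ContinuousMap.norm_le _ hr.le]
  intro x
  have h1 := hG x (ext fun i => x (g i)) (by
    intro a ha
    simp [ext, ha, g])
  have h2 := hp (fun i => x (g i))
  change |f x - (p (fun i => x (g i)) : ℝ)| ≤ r
  rw [abs_lt] at h1 h2
  rw [abs_le]
  constructor <;> linarith

theorem s8_open_meas {ι Y : Type*} [MeasurableSpace Y] (hk : IsKunen ι) (F : Y → C(ι → Bool, ℝ))
    (hF : ∀ x, Measurable fun y => F y x) (U : Set C(ι → Bool, ℝ)) (hU : IsOpen U) :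
    MeasurableSet (F ⁻¹' U) := by
  classical
  letI : MeasurableSpace ι := ⊤
  have : DiscreteMeasurableSpace ι := ⟨fun _ => trivial⟩
  have hcl := s8_clopens_countable
  obtain ⟨e, he⟩ := s8_inj hk
  have htop := s8_pi_top hk
  let S : (n : ℕ) → ((Fin n → Bool) → ℚ) → ℕ → Set (Y × (Fin n → ι)) := fun n p k =>
    {z | Metric.closedBall (s8fn z.2 p) (1 / ((k:ℝ) + 1)) ⊆ U} ∩
    ⋂ c, {z | |F z.1 (s8pt e c) - s8fn z.2 p (s8pt e c)| ≤ 1 / ((k:ℝ) + 1)}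
  have hS : ∀ n p k, MeasurableSet (S n p k) := by
    intro n p k
    refine MeasurableSet.inter ?_ (MeasurableSet.iInter fun c => ?_)
    · exact measurable_snd (htop n {g | Metric.closedBall (s8fn g p) (1 / ((k:ℝ) + 1)) ⊆ U})
    · refine measurableSet_le (continuous_abs.measurable.comp (Measurable.sub ?_ ?_)) measurable_const
      · exact (hF _).comp measurable_fst
      · have : Measurable (fun g : Fin n → ι => s8fn g p (s8pt e c)) := fun s _ => htop n _
        exact this.comp measurable_snd
  have hSiff : ∀ n p k y g, (y, g) ∈ S n p k ↔ 
      Metric.closedBall (s8fn g p) (1 / ((k:ℝ) + 1)) ⊆ U ∧ ‖F y - s8fn g p‖ ≤ 1 / ((k:ℝ) + 1) := by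
    intro n p k y g
    rw [s8_le_iff e he _ _ (by positivity)]
    simp only [S, mem_inter_iff, mem_iInter, mem_setOf_eq, ContinuousMap.sub_apply]
  have hEq : F ⁻¹' U = ⋃ (m : ℕ) (n : ℕ) (p : (Fin n → Bool) → ℚ) (k : ℕ),
      {y | (Measure.pi fun _ : Fin n => Measure.count.restrict (s8D (F y) (1 / ((m:ℝ) + 1))))
        (Prod.mk y ⁻¹' S n p k) ≠ 0} := by
    ext y
    simp only [mem_preimage, mem_iUnion, mem_setOf_eq]
    constructor
    · intro hy
      obtain ⟨δ, hδ, hball⟩ := Metric.isOpen_iff.1 hU _ hy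
      obtain ⟨k, hk⟩ := exists_nat_one_div_lt (half_pos hδ)
      have hkp : (0:ℝ) < 1 / ((k:ℝ) + 1) := by positivity
      obtain ⟨m, n, p, g, hg, hfg⟩ := s8_approx (F y) _ hkp
      refine ⟨m, n, p, k, ?_⟩
      have hfin : IsFiniteMeasure ((Measure.count : Measure ι).restrict (s8D (F y) (1 / ((m:ℝ) + 1)))) := by
        refine ⟨?_⟩
        rw [Measure.restrict_apply_univ]
        exact Measure.count_apply_lt_top.2 (s8_D_finite (F y) _ (by positivity))
      have hmem : (y, g) ∈ S n p k := by
        rw [hSiff]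
        refine ⟨fun f hf => hball ?_, hfg⟩
        rw [Metric.mem_closedBall] at hf
        rw [Metric.mem_ball]
        have h1 := dist_triangle f (s8fn g p) (F y)
        rw [dist_comm (s8fn g p), dist_eq_norm (F y)] at h1
        linarith
      have hpos : (Measure.pi fun _ : Fin n => (Measure.count : Measure ι).restrict (s8D (F y) (1 / ((m:ℝ) + 1)))) {g} ≠ 0 := by
        rw [Measure.pi_singleton]
        refine Finset.prod_ne_zero_iff.2 fun i _ => ?_
        rw [Measure.restrict_apply MeasurableSet.of_discrete,
          inter_eq_left.2 (singleton_subset_iff.2 (hg i)), Measure.count_singleton]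
        exact one_ne_zero
      intro h0
      exact hpos (measure_mono_null (singleton_subset_iff.2 hmem) h0)
    · rintro ⟨m, n, p, k, h⟩
      obtain ⟨g, hg⟩ := nonempty_of_measure_ne_zero h
      have hg : (y, g) ∈ S n p k := hg
      rw [hSiff] at hg
      apply hg.1
      rw [Metric.mem_closedBall, dist_eq_norm]
      exact hg.2
  rw [hEq]
  refine MeasurableSet.iUnion fun m => MeasurableSet.iUnion fun n => MeasurableSet.iUnion fun p =>
    MeasurableSet.iUnion fun k => ?_
  have := s8_meas_rho e he F hF (1 / ((m:ℝ) + 1)) (by positivity) n (S n p k) (hS n p k)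
  exact (this (measurableSet_singleton 0)).compl

theorem s8_equiv_cont {X : Type*} [NormedAddCommGroup X] [NormedSpace ℝ X] (N : X → ℝ)
    (hN : IsEquivNorm N) : Continuous N := by
  obtain ⟨h1, h2, c, C, hc, hC, h3⟩ := hN
  have hneg : ∀ x, N (-x) = N x := fun x => by
    have := h2 (-1) x
    simpa using this
  have : LipschitzWith (Real.toNNReal C) N := by
    apply LipschitzWith.of_dist_le_mul
    intro x y
    rw [Real.coe_toNNReal _ hC.le, Real.dist_eq, dist_eq_norm, abs_le]
    have e1 := h1 (x - y) y
    have e2 := h1 (y - x) x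
    rw [sub_add_cancel] at e1 e2
    have e3 := (h3 (x - y)).2
    have e4 := hneg (x - y)
    rw [neg_sub] at e4
    constructor <;> linarith
  exact this.continuous

theorem s8_kunen_C {ι : Type*} (hk : IsKunen ι) (N : C(ι → Bool, ℝ) → ℝ) (hN : IsEquivNorm N) :
    @Measurable _ ℝ (BaW C(ι → Bool, ℝ)) Real.measurableSpace N := by
  letI : MeasurableSpace C(ι → Bool, ℝ) := BaW C(ι → Bool, ℝ)
  refine measurable_of_isOpen fun V hV => ?_
  exact s8_open_meas hk id (fun x => s8_meas_clm (ContinuousMap.evalCLM ℝ x)) _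
    (hV.preimage (s8_equiv_cont N hN))

theorem s8_kunen_lp {ι : Type*} (hk : IsKunen ι) (N : lp (fun _ : ι => ℝ) 1 → ℝ) (hN : IsEquivNorm N) :
    @Measurable _ ℝ (BaW (lp (fun _ : ι => ℝ) 1)) Real.measurableSpace N := by
  letI : MeasurableSpace (lp (fun _ : ι => ℝ) 1) := BaW (lp (fun _ : ι => ℝ) 1)
  have hs : ∀ x : lp (fun _ : ι => ℝ) 1, HasSum (fun a => |x a|) ‖x‖ := by
    intro x
    have := lp.hasSum_norm (p := 1) (by norm_num) x
    simpa using this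
  let sg : Bool → ℝ := fun b => if b then 1 else -1
  have hsg : ∀ b, |sg b| = 1 := by intro b; cases b <;> simp [sg]
  have hsum : ∀ (x : lp (fun _ : ι => ℝ) 1) (s : ι → Bool), Summable fun a => x a * sg (s a) := by
    intro x s
    apply Summable.of_norm
    simpa [abs_mul, hsg] using (hs x).summable
  let T0 : lp (fun _ : ι => ℝ) 1 →ₗ[ℝ] C(ι → Bool, ℝ) :=
    { toFun := fun x => ⟨fun s => ∑' a, x a * sg (s a), by
        refine continuous_tsum (u := fun a => |x a|) (fun a => ?_) (hs x).summable (fun a s => ?_)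
        · exact continuous_const.mul ((continuous_of_discreteTopology (f := sg)).comp (continuous_apply a))
        · simp [abs_mul, hsg]⟩
      map_add' := fun x y => by
        ext s
        change ∑' a, (x a + y a) * sg (s a) = ∑' a, x a * sg (s a) + ∑' a, y a * sg (s a)
        rw [← (hsum x s).tsum_add (hsum y s)]
        simp_rw [add_mul]
      map_smul' := fun c x => by
        ext s
        change ∑' a, (c * x a) * sg (s a) = c * ∑' a, x a * sg (s a)
        rw [← tsum_mul_left]
        simp_rw [mul_assoc] }
  have hT0 : ∀ x s, T0 x s = ∑' a, x a * sg (s a) := fun x s => rfl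
  have hnorm : ∀ x, ‖T0 x‖ = ‖x‖ := by
    intro x
    apply le_antisymm
    · rw [ContinuousMap.norm_le _ (norm_nonneg x)]
      intro s
      rw [hT0]
      exact tsum_of_norm_bounded (hs x) (fun a => by simp [abs_mul, hsg])
    · have h1 := (T0 x).norm_coe_le_norm (fun a => decide (0 ≤ x a))
      refine le_trans ?_ h1
      rw [hT0]
      have : ∀ a, x a * sg (decide (0 ≤ x a)) = |x a| := by
        intro a
        by_cases h : 0 ≤ x a
        · simp [sg, h, abs_of_nonneg h]
        · simp [sg, h, abs_of_neg (not_le.1 h)]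
      simp_rw [this]
      rw [(hs x).tsum_eq]
      exact le_abs_self _
  let T : lp (fun _ : ι => ℝ) 1 →ₗᵢ[ℝ] C(ι → Bool, ℝ) := ⟨T0, hnorm⟩
  refine measurable_of_isOpen fun V hV => ?_
  obtain ⟨W, hW, hWV⟩ := T.isometry.isEmbedding.isInducing.isOpen_iff.1 (hV.preimage (s8_equiv_cont N hN))
  rw [← hWV]
  exact s8_open_meas hk T (fun s => s8_meas_clm ((ContinuousMap.evalCLM ℝ s).comp T.toContinuousLinearMap)) W hW

end part4

/-- For any cardinal `κ = |ι|`, the following are equivalent: (i) `κ` is a Kunen cardinal;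
(ii) every equivalent norm on `ℓ¹(κ)` is `Ba(ℓ¹(κ)_w)`-measurable; (iii) every equivalent
norm on `C(2^κ)` is `Ba(C(2^κ)_w)`-measurable. -/
theorem stmt8 (ι : Type*) :
    (IsKunen ι ↔
      ∀ N : lp (fun _ : ι => ℝ) 1 → ℝ, IsEquivNorm N →
        @Measurable _ ℝ (BaW (lp (fun _ : ι => ℝ) 1)) Real.measurableSpace N) ∧
    (IsKunen ι ↔
      ∀ N : C(ι → Bool, ℝ) → ℝ, IsEquivNorm N →
        @Measurable _ ℝ (BaW C(ι → Bool, ℝ)) Real.measurableSpace N) := by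

  exact ⟨⟨fun h N hN => s8_kunen_lp h N hN, s8_lp_kunen ι⟩,
    ⟨fun h N hN => s8_kunen_C h N hN, s8_C_kunen ι⟩⟩
end
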